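/- Let 0 → A →f B →g C → 0 be a short exact sequence of R-modules. Then the sequence is almost pure if and only if the following holds: for all n, m ∈ ℕ, all elements a_1, …, a_n ∈ A, all scalars r_{ij} ∈ R (1 ≤ i ≤ n, 1 ≤ j ≤ m), if there exist b_1, …, b_m ∈ B with f(a_i) = Σ_{j=1}^m r_{ij} b_j for all i, then for every s ∈ m there exist x_1, …, x_m ∈ A with s·a_i = Σ_{j=1}^m r_{ij} x_j for all i. -/

import Mathlib

universe u

/-- A short exact sequence `0 → A →f B → C → 0` is almost pure if for every module `M`
the kernel of `M ⊗ A → M ⊗ B` is almost zero. -/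
def IsAlmostPure {R : Type u} [CommRing R] (m : Ideal R)
    {A B : Type u} [AddCommGroup A] [Module R A] [AddCommGroup B] [Module R B]
    (f : A →ₗ[R] B) : Prop :=
  ∀ (M : Type u) [AddCommGroup M] [Module R M],
    ∀ s ∈ m, ∀ x ∈ LinearMap.ker (LinearMap.lTensor M f), s • x = 0

/-!
Everything can be tested one scalar `s` and one matrix `r` at a time. Let `N` be the cokernel of
`r : R ^ κ → R ^ ι`, with standard generators `eᵢ`. By right exactness of the tensor product,
`∑ i, eᵢ ⊗ aᵢ = 0` in `N ⊗ A` exactly when the system `aᵢ = ∑ j, rᵢⱼ xⱼ` is solvable in `A`. Hence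
`s` kills the kernel of `N ⊗ A → N ⊗ B` if and only if every system with matrix `r` that becomes
solvable in `B` is solvable in `A` after multiplication by `s`. Finally, cokernels of matrices
suffice as test modules, because each element of the kernel of `M ⊗ A → M ⊗ B` comes from one.
-/

universe v w

open TensorProduct

section TensorKernels

variable {R M A B : Type*} [CommSemiring R] [AddCommMonoid M] [Module R M]
  [AddCommMonoid A] [Module R A] [AddCommMonoid B] [Module R B]

theorem exists_eq_sum_tmul_of_span_range_eq_top {ι : Type*} [Fintype ι] {v : ι → M}
    (hv : Submodule.span R (Set.range v) = ⊤) (t : M ⊗[R] A) :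
    ∃ a : ι → A, t = ∑ i, v i ⊗ₜ[R] a i := by
  induction t with
  | zero => exact ⟨0, by simp⟩
  | tmul x y =>
    have hx : x ∈ Submodule.span R (Set.range v) := hv ▸ Submodule.mem_top
    obtain ⟨c, rfl⟩ := (Submodule.mem_span_range_iff_exists_fun R).1 hx
    exact ⟨fun i ↦ c i • y, by simp only [sum_tmul, smul_tmul]⟩
  | add x y hx hy =>
    obtain ⟨a, rfl⟩ := hx
    obtain ⟨b, rfl⟩ := hy
    exact ⟨a + b, by simp only [Pi.add_apply, tmul_add, Finset.sum_add_distrib]⟩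

theorem lTensor_rTensor_apply {N : Type*} [AddCommMonoid N] [Module R N]
    (φ : N →ₗ[R] M) (f : A →ₗ[R] B) (t : N ⊗[R] A) :
    f.lTensor M (φ.rTensor A t) = φ.rTensor B (f.lTensor N t) := by
  rw [← LinearMap.comp_apply, ← LinearMap.comp_apply, LinearMap.lTensor_comp_rTensor,
    LinearMap.rTensor_comp_lTensor]

theorem exists_fg_submodule_mem_ker_lTensor {f : A →ₗ[R] B} {x : M ⊗[R] A}
    (hx : x ∈ LinearMap.ker (f.lTensor M)) :
    ∃ Q : Submodule R M, Q.FG ∧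
      ∃ t ∈ LinearMap.ker (f.lTensor Q), Q.subtype.rTensor A t = x := by
  obtain ⟨P, hP, t, rfl⟩ := exists_of_fg x
  rw [LinearMap.mem_ker, lTensor_rTensor_apply] at hx
  obtain ⟨Q, hPQ, hQ, ht⟩ := eq_zero_of_fg_of_subtype_eq_zero hP hx
  refine ⟨Q, hQ, (Submodule.inclusion hPQ).rTensor A t, ?_, ?_⟩
  · rw [LinearMap.mem_ker, lTensor_rTensor_apply, ht]
  · rw [← LinearMap.comp_apply, ← LinearMap.rTensor_comp, Submodule.subtype_comp_inclusion]

end TensorKernels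

/-- The cokernel of the map `R ^ κ → R ^ ι` given by the matrix `r`: the module with one generator
for each row of `r` and one relation for each column. These are the test modules that detect
solvability of linear systems with matrix `r`. -/
abbrev MatrixCokernel {R ι κ : Type*} [CommRing R] [Fintype κ] (r : Matrix ι κ R) : Type _ :=
  (ι → R) ⧸ LinearMap.range r.mulVecLin

namespace MatrixCokernel

variable {R M A B ι κ : Type*} [CommRing R] [AddCommGroup M] [Module R M]
  [AddCommGroup A] [Module R A] [AddCommGroup B] [Module R B] [Fintype κ]

section Generators

variable [DecidableEq ι]

/-- The standard generator of the cokernel of `r` indexed by the row `i`: the class of the `i`-th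
standard basis vector. -/
def generator (r : Matrix ι κ R) (i : ι) : MatrixCokernel r :=
  Submodule.mkQ _ (Pi.single i 1)

theorem sum_smul_generator [Fintype ι] (r : Matrix ι κ R) (c : ι → R) :
    ∑ i, c i • generator r i = Submodule.mkQ _ c := by
  simp only [generator, ← map_smul, ← map_sum, ← pi_eq_sum_univ']

theorem span_range_generator [Finite ι] (r : Matrix ι κ R) :
    Submodule.span R (Set.range (generator r)) = ⊤ := by
  have := Fintype.ofFinite ι
  refine eq_top_iff.2 fun x _ ↦ ?_
  obtain ⟨c, rfl⟩ := Submodule.mkQ_surjective _ x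
  exact (Submodule.mem_span_range_iff_exists_fun R).2 ⟨c, sum_smul_generator r c⟩

variable [Fintype ι]

theorem sum_smul_generator_eq_zero_iff {r : Matrix ι κ R} {c : ι → R} :
    ∑ i, c i • generator r i = 0 ↔ ∃ d : κ → R, r.mulVec d = c := by
  rw [sum_smul_generator, Submodule.mkQ_apply, Submodule.Quotient.mk_eq_zero]
  rfl

theorem sum_col_smul_generator (r : Matrix ι κ R) (j : κ) :
    ∑ i, r i j • generator r i = 0 := by
  classical
  exact sum_smul_generator_eq_zero_iff.2 ⟨Pi.single j 1, r.mulVec_single_one j⟩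

theorem sum_generator_tmul_eq_zero_iff {r : Matrix ι κ R} {a : ι → A} :
    ∑ i, generator r i ⊗ₜ[R] a i = 0 ↔ ∃ x : κ → A, ∀ i, a i = ∑ j, r i j • x j := by
  constructor
  · intro ha
    obtain ⟨l, c, y, hay, hc⟩ :=
      vanishesTrivially_of_sum_tmul_eq_zero R (span_range_generator r) ha
    choose d hd using fun p ↦ sum_smul_generator_eq_zero_iff.1 (hc p)
    refine ⟨fun j ↦ ∑ p, d p j • y p, fun i ↦ ?_⟩
    calc
      a i = ∑ p, r.mulVec (d p) i • y p := by simp only [hay i, hd]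
      _ = ∑ p, ∑ j, r i j • d p j • y p := by
        simp only [Matrix.mulVec, dotProduct, Finset.sum_smul, mul_smul]
      _ = ∑ j, r i j • ∑ p, d p j • y p := by
        simp only [Finset.smul_sum, Finset.sum_comm (γ := κ)]
  · rintro ⟨x, hx⟩
    exact sum_tmul_eq_zero_of_vanishesTrivially R (.of_fintype r x hx (sum_col_smul_generator r))

theorem sum_generator_tmul_mem_ker_lTensor_iff {r : Matrix ι κ R} {f : A →ₗ[R] B} {a : ι → A} :
    ∑ i, generator r i ⊗ₜ[R] a i ∈ LinearMap.ker (f.lTensor (MatrixCokernel r)) ↔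
      ∃ b : κ → B, ∀ i, f (a i) = ∑ j, r i j • b j := by
  simp only [LinearMap.mem_ker, map_sum, LinearMap.lTensor_tmul, sum_generator_tmul_eq_zero_iff]

theorem smul_sum_generator_tmul_eq_zero_iff {r : Matrix ι κ R} {s : R} {a : ι → A} :
    s • ∑ i, generator r i ⊗ₜ[R] a i = 0 ↔ ∃ x : κ → A, ∀ i, s • a i = ∑ j, r i j • x j := by
  simp only [Finset.smul_sum, ← tmul_smul, sum_generator_tmul_eq_zero_iff]

theorem exists_linearMap_apply_generator {r : Matrix ι κ R} {v : ι → M}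
    (hv : ∀ j, ∑ i, r i j • v i = 0) :
    ∃ φ : MatrixCokernel r →ₗ[R] M, ∀ i, φ (generator r i) = v i := by
  have hker : LinearMap.range r.mulVecLin ≤ LinearMap.ker (Fintype.linearCombination R v) := by
    rw [Matrix.range_mulVecLin, Submodule.span_le]
    rintro _ ⟨j, rfl⟩
    exact hv j
  exact ⟨Submodule.liftQ _ _ hker, fun i ↦ by simp [generator]⟩

end Generators

theorem forall_mem_ker_lTensor_smul_eq_zero_iff [Finite ι] {r : Matrix ι κ R}
    {f : A →ₗ[R] B} {s : R} :
    (∀ t ∈ LinearMap.ker (f.lTensor (MatrixCokernel r)), s • t = 0) ↔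
      ∀ a : ι → A, (∃ b : κ → B, ∀ i, f (a i) = ∑ j, r i j • b j) →
        ∃ x : κ → A, ∀ i, s • a i = ∑ j, r i j • x j := by
  classical
  have := Fintype.ofFinite ι
  constructor
  · intro h a hb
    exact smul_sum_generator_tmul_eq_zero_iff.1
      (h _ (sum_generator_tmul_mem_ker_lTensor_iff.2 hb))
  · intro h t ht
    obtain ⟨a, rfl⟩ := exists_eq_sum_tmul_of_span_range_eq_top (span_range_generator r) t
    exact smul_sum_generator_tmul_eq_zero_iff.2
      (h a (sum_generator_tmul_mem_ker_lTensor_iff.1 ht))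

theorem exists_rTensor_eq_of_mem_ker_lTensor {f : A →ₗ[R] B} {x : M ⊗[R] A}
    (hx : x ∈ LinearMap.ker (f.lTensor M)) :
    ∃ (n k : ℕ) (r : Matrix (Fin n) (Fin k) R) (φ : MatrixCokernel r →ₗ[R] M),
      ∃ t ∈ LinearMap.ker (f.lTensor (MatrixCokernel r)), φ.rTensor A t = x := by
  obtain ⟨Q, hQ, t, ht, rfl⟩ := exists_fg_submodule_mem_ker_lTensor hx
  have : Module.Finite R Q := Module.Finite.iff_fg.2 hQ
  obtain ⟨n, v, hv⟩ := Module.Finite.exists_fin (R := R) (M := Q)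
  obtain ⟨a, rfl⟩ := exists_eq_sum_tmul_of_span_range_eq_top hv t
  simp only [LinearMap.mem_ker, map_sum, LinearMap.lTensor_tmul] at ht
  obtain ⟨k, r, b, hb, hr⟩ := vanishesTrivially_of_sum_tmul_eq_zero R hv ht
  obtain ⟨φ, hφ⟩ := exists_linearMap_apply_generator hr
  refine ⟨n, k, r, Q.subtype ∘ₗ φ, ∑ i, generator r i ⊗ₜ a i,
    sum_generator_tmul_mem_ker_lTensor_iff.2 ⟨b, hb⟩, ?_⟩
  simp [hφ]

end MatrixCokernel

theorem almostPure_iff_equations_general {R : Type u} [CommRing R] (s : R)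
    {A : Type v} {B : Type w} [AddCommGroup A] [Module R A] [AddCommGroup B] [Module R B]
    (f : A →ₗ[R] B) :
    (∀ (M : Type u) [AddCommGroup M] [Module R M],
        ∀ x ∈ LinearMap.ker (f.lTensor M), s • x = 0) ↔
      ∀ (n k : ℕ) (a : Fin n → A) (r : Fin n → Fin k → R),
        (∃ b : Fin k → B, ∀ i, f (a i) = ∑ j, r i j • b j) →
          ∃ x : Fin k → A, ∀ i, s • a i = ∑ j, r i j • x j := by
  constructor
  · intro h n k a r
    exact MatrixCokernel.forall_mem_ker_lTensor_smul_eq_zero_iff.1 (h (MatrixCokernel r)) a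
  · intro h M _ _ x hx
    obtain ⟨n, k, r, φ, t, ht, rfl⟩ := MatrixCokernel.exists_rTensor_eq_of_mem_ker_lTensor hx
    have hst : s • t = 0 :=
      MatrixCokernel.forall_mem_ker_lTensor_smul_eq_zero_iff.2 (fun a ↦ h n k a r) t ht
    rw [← map_smul, hst, map_zero]

/-- The equational criterion for almost purity. -/
theorem almostPure_iff_equations
    {R : Type u} [CommRing R] (m : Ideal R) (hm : m * m = m)
    {A B C : Type u} [AddCommGroup A] [Module R A] [AddCommGroup B] [Module R B]
    [AddCommGroup C] [Module R C]
    (f : A →ₗ[R] B) (g : B →ₗ[R] C)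
    (hf : Function.Injective f) (hg : Function.Surjective g)
    (hfg : LinearMap.range f = LinearMap.ker g) :
    IsAlmostPure m f ↔
      (∀ (n k : ℕ) (a : Fin n → A) (r : Fin n → Fin k → R),
        (∃ b : Fin k → B, ∀ i, f (a i) = ∑ j, r i j • b j) →
          ∀ s ∈ m, ∃ x : Fin k → A, ∀ i, s • a i = ∑ j, r i j • x j) :=
  ⟨fun h n k a r hb s hs ↦ (almostPure_iff_equations_general s f).1 (h · s hs) n k a r hb,
    fun h M _ _ s hs ↦ (almostPure_iff_equations_general s f).2 (h · · · · · s hs) M⟩
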